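/- The linear span in Q[S_n] of the elements E_i (the sum of all permutations of [n] with exactly i-1 descents, for i = 1,...,n) is a commutative subalgebra of Q[S_n] of dimension n. -/

import Mathlib

open scoped Classical

noncomputable section

/-- The value of `π` at the 1-based position `i`, with the convention
`π(0) = π(n+1) = 0` and values in `{1, …, n}`. -/
def pval {n : ℕ} (π : Equiv.Perm (Fin n)) (i : ℕ) : ℕ :=
  if h : 1 ≤ i ∧ i ≤ n then ((π ⟨i - 1, by omega⟩ : Fin n) : ℕ) + 1 else 0

/-- The descent set of `π`: positions `1 ≤ s ≤ n-1` with `π(s) > π(s+1)`. -/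
def desSet {n : ℕ} (π : Equiv.Perm (Fin n)) : Finset ℕ :=
  (Finset.Ico 1 n).filter fun s => pval π (s + 1) < pval π s

/-- The descent number of `π`. -/
def des {n : ℕ} (π : Equiv.Perm (Fin n)) : ℕ := (desSet π).card

/-!
For a finite chain `α`, let `Φ(α)` be the sum of the permutations `sort g` over all `g : [n] → α`.
Sorting stably by `g` and then by `h ∘ sort g` is sorting by the pair `(h, g)` in lexicographic
order, so `Φ(α) Φ(β) = Φ(β ×ₗ α)`. Since `Φ(α)` depends only on `|α|`, the map `k ↦ Φ(Fin k)` is a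
homomorphism from the commutative monoid `(ℕ, ·)`, and the span of its values is a commutative
subalgebra.

A map `g` is sorted by `π` exactly when adding to `g(π(s))` the number of ascents of `π` before `s`
gives a strictly increasing sequence. Counting these sequences yields
`Φ(Fin k) = ∑_d C(n + k - 1 - d, n) E_{d+1}`, a unitriangular system for `k = 1, …, n`, so the `E_i`
span the same space. They are linearly independent because every descent number `d < n` occurs.
-/

open Equiv Finset

section StableSorting

variable {n : ℕ} {α β : Type*} [LinearOrder α] [LinearOrder β]

theorem eq_sort_iff_strictMono_toLex {π : Perm (Fin n)} {g : Fin n → α} :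
    π = Tuple.sort g ↔ StrictMono fun s => toLex (g (π s), π s) :=
  Tuple.eq_sort_iff'

theorem sort_comp_of_strictMono {e : α → β} (he : StrictMono e) (g : Fin n → α) :
    Tuple.sort (e ∘ g) = Tuple.sort g := by
  obtain ⟨hmono, hties⟩ := Tuple.eq_sort_iff.1 (rfl : Tuple.sort g = Tuple.sort g)
  exact (Tuple.eq_sort_iff.2
    ⟨he.monotone.comp hmono, fun i j hij h => hties i j hij (he.injective h)⟩).symm

theorem sort_mul_sort_comp_sort (g : Fin n → α) (h : Fin n → β) :
    Tuple.sort g * Tuple.sort (h ∘ Tuple.sort g) = Tuple.sort fun j => toLex (h j, g j) := by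
  have hg := eq_sort_iff_strictMono_toLex.1 (rfl : Tuple.sort g = Tuple.sort g)
  have hh := eq_sort_iff_strictMono_toLex.1
    (rfl : Tuple.sort (h ∘ Tuple.sort g) = Tuple.sort (h ∘ Tuple.sort g))
  refine eq_sort_iff_strictMono_toLex.2 fun i j hij => ?_
  have hhij := Prod.Lex.toLex_lt_toLex.1 (hh hij)
  simp only [Prod.Lex.toLex_lt_toLex, toLex_inj, Prod.mk.injEq]
  rcases hhij with hlt | ⟨heq, hτ⟩
  · exact .inl (.inl hlt)
  · rcases Prod.Lex.toLex_lt_toLex.1 (hg hτ) with hlt | ⟨heq', hσ⟩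
    · exact .inl (.inr ⟨heq, hlt⟩)
    · exact .inr ⟨⟨heq, heq'⟩, hσ⟩

end StableSorting

section SortSum

variable (R : Type*) [Semiring R] (n : ℕ)

/-- The element `Φ(α) = ∑ sort g` of the group algebra of `S_n`, the sum over all `g : [n] → α`. -/
def sortSum (α : Type*) [LinearOrder α] [Fintype α] : MonoidAlgebra R (Perm (Fin n)) :=
  ∑ g : Fin n → α, MonoidAlgebra.of R (Perm (Fin n)) (Tuple.sort g)

variable (α β : Type*) [LinearOrder α] [Fintype α] [LinearOrder β] [Fintype β]

variable {α β} in
theorem sortSum_congr (h : Fintype.card α = Fintype.card β) : sortSum R n α = sortSum R n β := by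
  let e : α ≃o β := (Fintype.orderIsoFinOfCardEq α h).symm.trans (Fintype.orderIsoFinOfCardEq β rfl)
  refine Fintype.sum_equiv ((Equiv.refl _).arrowCongr e.toEquiv) _ _ fun g => ?_
  exact congrArg _ (sort_comp_of_strictMono e.strictMono g).symm

theorem sortSum_mul_sortSum : sortSum R n α * sortSum R n β = sortSum R n (β ×ₗ α) := by
  simp only [sortSum, sum_mul_sum, ← map_mul]
  calc ∑ g : Fin n → α, ∑ h : Fin n → β, MonoidAlgebra.of R _ (Tuple.sort g * Tuple.sort h)
    _ = ∑ g : Fin n → α, ∑ h : Fin n → β,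
          MonoidAlgebra.of R _ (Tuple.sort fun j => toLex (h j, g j)) := by
        refine sum_congr rfl fun g _ => ?_
        simp only [← sort_mul_sort_comp_sort]
        exact (((Tuple.sort g).symm.arrowCongr (Equiv.refl β)).sum_comp fun h =>
          MonoidAlgebra.of R _ (Tuple.sort g * Tuple.sort h)).symm
    _ = ∑ f : Fin n → β ×ₗ α, MonoidAlgebra.of R _ (Tuple.sort f) := by
        rw [sum_comm, ← Fintype.sum_prod_type']
        exact Fintype.sum_equiv (Equiv.arrowProdEquivProdArrow (Fin n) _ _).symm _ _ fun _ => rfl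

theorem sortSum_of_unique [Unique α] : sortSum R n α = 1 := by
  have hsort (g : Fin n → α) : Tuple.sort g = 1 :=
    Tuple.sort_eq_refl_iff_monotone.2 fun _ _ _ => (Subsingleton.elim _ _).le
  simp [sortSum, hsort, MonoidAlgebra.one_def]

/-- The multiplicative map `k ↦ Φ(Fin k)`. -/
def sortSumHom : ℕ →* MonoidAlgebra R (Perm (Fin n)) where
  toFun k := sortSum R n (Fin k)
  map_one' := sortSum_of_unique R n (Fin 1)
  map_mul' k l := by
    rw [sortSum_mul_sortSum]
    exact sortSum_congr R n (by simp [mul_comm])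

end SortSum

section Descents

variable {n : ℕ}

theorem succ_mem_desSet {π : Perm (Fin (n + 1))} (i : Fin n) :
    (i : ℕ) + 1 ∈ desSet π ↔ π i.succ < π i.castSucc := by
  have hpval (j : Fin (n + 1)) : pval π (j + 1) = π j + 1 := dif_pos (by omega)
  have hsucc := hpval i.succ
  have hcastSucc := hpval i.castSucc
  simp only [Fin.val_succ, Fin.val_castSucc] at hsucc hcastSucc
  simp only [desSet, mem_filter, mem_Ico, hsucc, hcastSucc, Fin.lt_def]
  omega

theorem des_le (π : Perm (Fin (n + 1))) : des π ≤ n :=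
  (card_filter_le _ _).trans (by simp)

/-- The number of ascents of `π` among the 1-based positions `1, …, s`. Ascents are encoded as
non-descents, so this is meaningful for `s < n` only. -/
def ascCount (π : Perm (Fin n)) (s : ℕ) : ℕ := Nat.count (fun i => i + 1 ∉ desSet π) s

theorem des_add_ascCount (π : Perm (Fin (n + 1))) : des π + ascCount π n = n := by
  have hdes : des π = #{i ∈ range n | i + 1 ∈ desSet π} := by
    refine (card_bij (fun i _ => i + 1) (by simp) (by simp) fun s hs => ?_).symm
    obtain ⟨h1, hn⟩ := mem_Ico.1 (mem_filter.1 hs).1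
    exact ⟨s - 1, mem_filter.2 ⟨mem_range.2 (by omega), by rwa [Nat.sub_add_cancel h1]⟩,
      Nat.sub_add_cancel h1⟩
  rw [hdes, ascCount, Nat.count_eq_card_filter_range, card_filter_add_card_filter_not, card_range]

theorem ascCount_add_one (π : Perm (Fin (n + 1))) (i : Fin n) :
    ascCount π (i + 1) = ascCount π i + if π i.castSucc < π i.succ then 1 else 0 := by
  have hne : π i.castSucc ≠ π i.succ := π.injective.ne i.castSucc_lt_succ.ne
  simp only [ascCount, Nat.count_succ, succ_mem_desSet, not_lt, hne.le_iff_lt]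

theorem eq_sort_iff_strictMono_add_ascCount {k : ℕ} {π : Perm (Fin (n + 1))}
    {g : Fin (n + 1) → Fin k} :
    π = Tuple.sort g ↔ StrictMono fun s => (g (π s) : ℕ) + ascCount π s := by
  rw [eq_sort_iff_strictMono_toLex, Fin.strictMono_iff_lt_succ, Fin.strictMono_iff_lt_succ]
  refine forall_congr' fun i => ?_
  simp only [Prod.Lex.toLex_lt_toLex, Fin.val_succ, Fin.val_castSucc, ascCount_add_one]
  split_ifs with hasc <;>
    simp only [hasc, and_true, and_false, or_false, Fin.lt_def, Fin.ext_iff] <;> omega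

theorem ascCount_le_of_strictMono (π : Perm (Fin (n + 1))) {h : Fin (n + 1) → ℕ}
    (hh : StrictMono h) (s : Fin (n + 1)) : ascCount π s ≤ h s := by
  induction s using Fin.induction with
  | zero => simp [ascCount]
  | succ i ih =>
    have hlt := hh i.castSucc_lt_succ
    rw [Fin.val_castSucc] at ih
    rw [Fin.val_succ, ascCount_add_one]
    split_ifs <;> omega

theorem lt_add_ascCount_of_strictMono (π : Perm (Fin (n + 1))) {k : ℕ} {h : Fin (n + 1) → ℕ}
    (hh : StrictMono h) (hlast : h (Fin.last n) < k + ascCount π n) (s : Fin (n + 1)) :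
    h s < k + ascCount π s := by
  induction s using Fin.reverseInduction with
  | last => exact hlast
  | cast i ih =>
    have hlt := hh i.castSucc_lt_succ
    rw [Fin.val_succ, ascCount_add_one] at ih
    rw [Fin.val_castSucc]
    split_ifs at ih <;> omega

theorem card_filter_strictMono (n : ℕ) (α : Type*) [LinearOrder α] [Fintype α] :
    #{h : Fin n → α | StrictMono h} = (Fintype.card α).choose n := by
  let e : {h : Fin n → α // StrictMono h} ≃ (Fin n ↪o α) :=
    { toFun h := OrderEmbedding.ofStrictMono h.1 h.2
      invFun f := ⟨f, f.strictMono⟩ }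
  rw [← Fintype.card_subtype, ← Nat.card_eq_fintype_card,
    Nat.card_congr (e.trans Set.powersetCard.ofFinEmbEquiv), Set.powersetCard.card,
    Nat.card_eq_fintype_card]

theorem card_filter_sort_eq (k : ℕ) (π : Perm (Fin (n + 1))) :
    #{g : Fin (n + 1) → Fin k | Tuple.sort g = π} = (k + ascCount π n).choose (n + 1) := by
  have hle (s : Fin (n + 1)) : ascCount π s ≤ ascCount π n := Nat.count_monotone _ (by omega)
  rw [← Fintype.card_fin (k + ascCount π n), ← card_filter_strictMono]
  refine card_bij (fun g _ s => ⟨g (π s) + ascCount π s, by have := hle s; omega⟩) ?_ ?_ ?_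
  · intro g hg
    rw [mem_filter_univ, eq_comm, eq_sort_iff_strictMono_add_ascCount] at hg
    exact (mem_filter_univ _).2 hg
  · intro g₁ _ g₂ _ hg
    refine π.surjective.injective_comp_right (funext fun s => Fin.ext ?_)
    simpa using congrFun hg s
  · intro h hh
    have hmono : StrictMono fun s => (h s : ℕ) := (mem_filter_univ h).1 hh
    have hge := ascCount_le_of_strictMono π hmono
    have hlt := lt_add_ascCount_of_strictMono π hmono (h (Fin.last n)).isLt
    let g : Fin (n + 1) → Fin k := fun i =>
      ⟨h (π.symm i) - ascCount π (π.symm i), by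
        have := hge (π.symm i); have := hlt (π.symm i); omega⟩
    have hg (s : Fin (n + 1)) : (g (π s) : ℕ) + ascCount π s = h s := by
      simp [g, Nat.sub_add_cancel (hge s)]
    refine ⟨g, ?_, funext fun s => Fin.ext (hg s)⟩
    rw [mem_filter_univ, eq_comm, eq_sort_iff_strictMono_add_ascCount]
    simpa only [hg] using hmono

/-- The permutation of `[n]` reversing the order of the first `d + 1` entries, a permutation with
`d` descents. -/
def prefixRev {d : ℕ} (hd : d < n) : Perm (Fin n) :=
  Function.Involutive.toPerm
    (fun i => if (i : ℕ) ≤ d then ⟨d - i, by omega⟩ else i)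
    fun i => by grind

theorem val_prefixRev {d : ℕ} (hd : d < n) (i : Fin n) :
    (prefixRev hd i : ℕ) = if (i : ℕ) ≤ d then d - (i : ℕ) else i :=
  apply_ite _ _ _ _

theorem desSet_prefixRev {d : ℕ} (hd : d < n + 1) : desSet (prefixRev hd) = Icc 1 d := by
  ext s
  by_cases hs : 1 ≤ s ∧ s ≤ n
  · obtain ⟨i, rfl⟩ : ∃ i : Fin n, s = i + 1 := ⟨⟨s - 1, by omega⟩, by simp; omega⟩
    simp only [succ_mem_desSet, Fin.lt_def, val_prefixRev, Fin.val_succ, Fin.val_castSucc, mem_Icc]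
    split_ifs <;> omega
  · simp only [desSet, mem_filter, mem_Ico, mem_Icc]
    omega

theorem exists_des_eq {d : ℕ} (hd : d < n) : ∃ π : Perm (Fin n), des π = d := by
  obtain _ | n := n
  · omega
  · exact ⟨prefixRev hd, by simp [des, desSet_prefixRev]⟩

end Descents

section DescentSum

variable (R : Type*) (n : ℕ)

/-- The sum of the permutations of `[n]` with exactly `d` descents; it is the paper's `E_{d+1}`. -/
def descentSum [Semiring R] (d : ℕ) : MonoidAlgebra R (Perm (Fin n)) :=
  ∑ π : Perm (Fin n) with des π = d, MonoidAlgebra.of R (Perm (Fin n)) π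

variable {n} in
theorem coeff_descentSum [Semiring R] (d : ℕ) (π : Perm (Fin n)) :
    (descentSum R n d).coeff π = if des π = d then 1 else 0 := by
  simp [descentSum, Finsupp.single_apply, Finsupp.finsetSum_apply]

theorem linearIndependent_descentSum [Ring R] :
    LinearIndependent R fun d : Fin n => descentSum R n d := by
  rw [Fintype.linearIndependent_iff]
  intro c hc d
  obtain ⟨π, hπ⟩ := exists_des_eq d.isLt
  have hcoeff := congrArg (fun a => a.coeff π) hc
  simpa [coeff_descentSum, Finsupp.finsetSum_apply, hπ, Fin.val_inj] using hcoeff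

theorem sortSum_fin [Semiring R] (k : ℕ) : sortSum R (n + 1) (Fin k) =
    ∑ d ∈ range (n + 1), (k + (n - d)).choose (n + 1) • descentSum R (n + 1) d := by
  have hmaps (π : Perm (Fin (n + 1))) (_ : π ∈ univ) : des π ∈ range (n + 1) :=
    mem_range_succ_iff.2 (des_le π)
  rw [sortSum, ← sum_fiberwise univ Tuple.sort, ← sum_fiberwise_of_maps_to hmaps]
  refine sum_congr rfl fun d _ => ?_
  rw [descentSum, smul_sum]
  refine sum_congr rfl fun π hπ => ?_
  have hasc : n - d = ascCount π n := by
    have := des_add_ascCount π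
    have := (mem_filter_univ _).1 hπ
    omega
  rw [hasc, ← card_filter_sort_eq, ← sum_const]
  exact sum_congr rfl fun g hg => by rw [(mem_filter_univ _).1 hg]

theorem descentSum_mem_span_sortSum [Ring R] {d : ℕ} (hd : d < n + 1) :
    descentSum R (n + 1) d ∈ Submodule.span R (Set.range (sortSumHom R (n + 1))) := by
  induction d using Nat.strong_induction_on with
  | _ d ih =>
    have htriangular : sortSum R (n + 1) (Fin (d + 1)) =
        ∑ e ∈ range d, (d + 1 + (n - e)).choose (n + 1) • descentSum R (n + 1) e +
          descentSum R (n + 1) d := by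
      have hchoose : (d + 1 + (n - d)).choose (n + 1) = 1 := by
        rw [show d + 1 + (n - d) = n + 1 by omega, Nat.choose_self]
      rw [sortSum_fin, ← sum_subset (range_subset_range.2 (Nat.succ_le_of_lt hd)), sum_range_succ,
        hchoose, one_smul]
      intro e he hed
      rw [mem_range] at he hed
      rw [Nat.choose_eq_zero_of_lt (by omega), zero_smul]
    rw [← sub_eq_iff_eq_add'.2 htriangular]
    refine sub_mem (Submodule.subset_span ⟨d + 1, rfl⟩) (sum_mem fun e he => ?_)
    have hed := mem_range.1 he
    exact nsmul_mem (ih e hed (by omega)) _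

theorem span_descentSum_eq_span_sortSum [Ring R] :
    Submodule.span R (Set.range fun d : Fin (n + 1) => descentSum R (n + 1) d) =
      Submodule.span R (Set.range (sortSumHom R (n + 1))) := by
  refine le_antisymm (Submodule.span_le.2 ?_) (Submodule.span_le.2 ?_)
  · rintro _ ⟨d, rfl⟩
    exact descentSum_mem_span_sortSum R n d.isLt
  · rintro _ ⟨k, rfl⟩
    change sortSum R (n + 1) (Fin k) ∈ _
    rw [sortSum_fin]
    exact sum_mem fun d hd =>
      nsmul_mem (Submodule.subset_span (Set.mem_range_self (⟨d, mem_range.1 hd⟩ : Fin (n + 1)))) _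

end DescentSum

theorem mul_mem_and_mul_comm_of_mem_span_range {R M A : Type*} [CommSemiring R] [CommMonoid M]
    [Semiring A] [Algebra R A] (f : M →* A) {a b : A}
    (ha : a ∈ Submodule.span R (Set.range f)) (hb : b ∈ Submodule.span R (Set.range f)) :
    a * b ∈ Submodule.span R (Set.range f) ∧ a * b = b * a := by
  have hspan : Submodule.span R (Set.range f) =
      Subalgebra.toSubmodule (Algebra.adjoin R (Set.range f)) := by
    rw [Algebra.adjoin_eq_span, ← MonoidHom.coe_mrange, Submonoid.closure_eq]
  have hcomm : IsMulCommutative (Algebra.adjoin R (Set.range f)) := by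
    refine Algebra.isMulCommutative_adjoin R ?_
    rintro _ ⟨k, rfl⟩ _ ⟨l, rfl⟩
    rw [← map_mul, mul_comm, map_mul]
  rw [hspan, Subalgebra.mem_toSubmodule] at ha hb ⊢
  exact ⟨mul_mem ha hb, setLike_mul_comm ha hb⟩

theorem stmt3_general (R : Type*) [CommRing R] [Nontrivial R] (n : ℕ) :
    let E : ℕ → MonoidAlgebra R (Equiv.Perm (Fin n)) := fun i =>
      ∑ π ∈ Finset.univ.filter (fun π : Equiv.Perm (Fin n) => des π = i - 1),
        MonoidAlgebra.of R (Equiv.Perm (Fin n)) π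
    let S : Submodule R (MonoidAlgebra R (Equiv.Perm (Fin n))) :=
      Submodule.span R (E '' Set.Icc 1 n)
    (∀ a ∈ S, ∀ b ∈ S, a * b ∈ S ∧ a * b = b * a) ∧ Module.finrank R ↥S = n := by
  intro E S
  have hE : E '' Set.Icc 1 n = Set.range fun d : Fin n => descentSum R n d := by
    ext a
    constructor
    · rintro ⟨i, ⟨h1, hn⟩, rfl⟩
      exact ⟨⟨i - 1, by omega⟩, rfl⟩
    · rintro ⟨d, rfl⟩
      exact ⟨d + 1, ⟨by omega, d.isLt⟩, rfl⟩
  have hS : S = Submodule.span R (Set.range fun d : Fin n => descentSum R n d) :=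
    congrArg (Submodule.span R) hE
  rw [hS]
  constructor
  · intro a ha b hb
    obtain _ | n := n
    · simp_all
    · rw [span_descentSum_eq_span_sortSum] at ha hb ⊢
      exact mul_mem_and_mul_comm_of_mem_span_range (sortSumHom R (n + 1)) ha hb
  · rw [finrank_span_eq_card (linearIndependent_descentSum R n), Fintype.card_fin]

theorem stmt3 (n : ℕ) :
    let E : ℕ → MonoidAlgebra ℚ (Equiv.Perm (Fin n)) := fun i =>
      ∑ π ∈ Finset.univ.filter (fun π : Equiv.Perm (Fin n) => des π = i - 1),
        MonoidAlgebra.of ℚ (Equiv.Perm (Fin n)) π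
    let S : Submodule ℚ (MonoidAlgebra ℚ (Equiv.Perm (Fin n))) :=
      Submodule.span ℚ (E '' Set.Icc 1 n)
    (∀ a ∈ S, ∀ b ∈ S, a * b ∈ S ∧ a * b = b * a) ∧ Module.finrank ℚ ↥S = n :=
  stmt3_general ℚ n
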